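/- Let f : H → ℝ ∪ {+∞} be proper, convex, lower semicontinuous and g : H → ℝ convex and Fréchet differentiable with (1/β)-Lipschitz gradient, such that argmin(f + g) ≠ ∅, and γ ∈ (0, 2β]. Under the same parameter conditions on (β_n), (λ_n) as in the forward-backward theorem, the iterates x_{n+1} = (1-λ_n)β_n x_n + λ_n prox_{γf}(β_n x_n - γ ∇g(β_n x_n)) converge strongly to the minimal norm minimizer of f + g. -/

import Mathlib

open Filter Topology

open scoped RealInnerProductSpace

section RealSequences

/-- A nonnegative sequence with `s (n + 1) ≤ (1 - a n) * s n + a n * d n + e n`, where `∑ a n`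
diverges, `limsup d n ≤ 0` and `∑ e n` converges, tends to zero. -/
lemma tendsto_zero_of_le_one_sub_mul_add {s a d e : ℕ → ℝ} (hs : ∀ n, 0 ≤ s n)
    (ha0 : ∀ n, 0 ≤ a n) (ha1 : ∀ n, a n ≤ 1) (ha : ¬ Summable a)
    (hd : ∀ ε > 0, ∀ᶠ n in atTop, d n ≤ ε) (he0 : ∀ n, 0 ≤ e n) (he : Summable e)
    (h : ∀ n, s (n + 1) ≤ (1 - a n) * s n + a n * d n + e n) :
    Tendsto s atTop (𝓝 0) := by
  set t : ℕ → ℝ := fun n => ∑' k, e (k + n) with ht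
  have ht0 : ∀ n, 0 ≤ t n := fun n => tsum_nonneg fun k => he0 _
  have htlim : Tendsto t atTop (𝓝 0) := tendsto_sum_nat_add e
  have htsucc : ∀ n, t n = e n + t (n + 1) := by
    intro n
    have := ((summable_nat_add_iff n).2 he).tsum_eq_zero_add
    simp only [ht]
    rw [this]
    simp only [zero_add]
    congr 1
    exact tsum_congr fun k => by congr 1; ring
  have key : ∀ ε > 0, ∀ᶠ n in atTop, s n ≤ 3 * ε := by
    intro ε hε
    obtain ⟨N, hN⟩ := eventually_atTop.1
      ((hd ε hε).and (htlim.eventually (ge_mem_nhds hε)))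
    set q : ℕ → ℝ := fun n => s n + t n - 2 * ε with hq
    have hstep : ∀ n ≥ N, q (n + 1) ≤ (1 - a n) * q n := by
      intro n hn
      obtain ⟨h1, h2⟩ := hN n hn
      have h3 := h n
      have h4 := htsucc n
      have h5 := mul_le_mul_of_nonneg_left h1 (ha0 n)
      have h6 := mul_le_mul_of_nonneg_left h2 (ha0 n)
      simp only [hq]
      nlinarith
    have hex : ∃ n ≥ N, q n ≤ ε := by
      by_contra! hcon
      apply ha
      rw [← summable_nat_add_iff N]
      refine summable_of_sum_range_le (c := q N / ε) (fun n => ha0 _) fun n => ?_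
      rw [le_div_iff₀ hε]
      have : (∑ i ∈ Finset.range n, a (i + N)) * ε ≤ q N - q (n + N) := by
        induction n with
        | zero => simp
        | succ k ih =>
          rw [Finset.sum_range_succ]
          have h1 := hstep (k + N) (by omega)
          have h2 := hcon (k + N) (by omega)
          have h3 := mul_le_mul_of_nonneg_left h2.le (ha0 (k + N))
          rw [show k + 1 + N = k + N + 1 by ring]
          nlinarith
      have := hcon (n + N) (by omega)
      linarith
    obtain ⟨m, hm, hqm⟩ := hex
    refine eventually_atTop.2 ⟨m, fun n hn => ?_⟩
    have : q n ≤ ε := by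
      induction n, hn using Nat.le_induction with
      | base => exact hqm
      | succ k hk ih =>
        have h1 := hstep k (by omega)
        have h2 := mul_le_mul_of_nonneg_left ih (sub_nonneg.2 (ha1 k))
        have h3 := mul_nonneg (ha0 k) hε.le
        nlinarith
    have h2 := ht0 n
    simp only [hq] at this
    linarith
  rw [Metric.tendsto_nhds]
  intro ε hε
  filter_upwards [key (ε / 4) (by positivity)] with n hn
  rw [Real.dist_eq, sub_zero, abs_of_nonneg (hs n)]
  linarith

lemma HasDerivAt.nonneg_of_le_right {φ : ℝ → ℝ} {d : ℝ} (hφ : HasDerivAt φ d 0)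
    (h : ∀ t, 0 < t → t ≤ 1 → φ 0 ≤ φ t) : 0 ≤ d := by
  refine ge_of_tendsto hφ.tendsto_slope_zero_right ?_
  filter_upwards [Ioc_mem_nhdsGT (zero_lt_one' ℝ)] with t ht
  have := h t ht.1 ht.2
  rw [zero_add, smul_eq_mul]
  exact mul_nonneg (inv_nonneg.2 ht.1.le) (by linarith)

end RealSequences

section Nonexpansive

variable {H : Type*} [NormedAddCommGroup H] [InnerProductSpace ℝ H]

lemma exists_weak_limit [CompleteSpace H] {ι : Type*} (U : Ultrafilter ι) {y : ι → H} {C : ℝ}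
    (hy : ∀ i, ‖y i‖ ≤ C) : ∃ z : H, ∀ v : H, Tendsto (fun i => ⟪y i, v⟫) U (𝓝 ⟪z, v⟫) := by
  let e : ι → WeakDual ℝ H := fun i =>
    StrongDual.toWeakDual (InnerProductSpace.toDual ℝ H (y i))
  have hc := WeakDual.isCompact_closedBall (𝕜 := ℝ) (0 : StrongDual ℝ H) C
  obtain ⟨l, -, hl⟩ := hc.ultrafilter_le_nhds (U.map e) (by
    rw [le_principal_iff]
    refine Filter.mem_map.2 (univ_mem' fun i => ?_)
    simpa [e] using hy i)
  refine ⟨(InnerProductSpace.toDual ℝ H).symm (WeakDual.toStrongDual l), fun v => ?_⟩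
  have h1 : Tendsto e U (𝓝 l) := hl
  have h2 := ((WeakDual.eval_continuous v).tendsto l).comp h1
  rw [InnerProductSpace.toDual_symm_apply]
  exact h2

/-- Demiclosedness of `id - R` at zero for a nonexpansive map `R`. -/
lemma fixed_of_weak_limit {ι : Type*} {l : Filter ι} [l.NeBot] {R : H → H}
    (hR : ∀ u v, ‖R u - R v‖ ≤ ‖u - v‖) {y : ι → H} {C : ℝ} (hy : ∀ i, ‖y i‖ ≤ C) {z : H}
    (hz : ∀ v : H, Tendsto (fun i => ⟪y i, v⟫) l (𝓝 ⟪z, v⟫))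
    (hres : Tendsto (fun i => ‖R (y i) - y i‖) l (𝓝 0)) : R z = z := by
  have hle : ∀ i, ‖z - R z‖ ^ 2 ≤
      ‖R (y i) - y i‖ * (‖R (y i) - y i‖ + 2 * (C + ‖z‖)) - 2 * (⟪y i, z - R z⟫ - ⟪z, z - R z⟫) := by
    intro i
    have h1 : ‖y i - R z‖ ≤ ‖R (y i) - y i‖ + ‖y i - z‖ := by
      have := norm_sub_le_norm_sub_add_norm_sub (y i) (R (y i)) (R z)
      rw [norm_sub_rev (y i) (R (y i))] at this
      linarith [hR (y i) z]
    have h2 : ‖y i - R z‖ ^ 2 = ‖y i - z‖ ^ 2 + 2 * ⟪y i - z, z - R z⟫ + ‖z - R z‖ ^ 2 := by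
      rw [← norm_add_sq_real, sub_add_sub_cancel]
    have h3 : ‖y i - z‖ ≤ C + ‖z‖ := (norm_sub_le _ _).trans (by linarith [hy i])
    rw [inner_sub_left] at h2
    have h4 := pow_le_pow_left₀ (norm_nonneg _) h1 2
    have h5 := mul_le_mul_of_nonneg_left h3 (norm_nonneg (R (y i) - y i))
    nlinarith
  have hlim : Tendsto (fun i => ‖R (y i) - y i‖ * (‖R (y i) - y i‖ + 2 * (C + ‖z‖)) -
      2 * (⟪y i, z - R z⟫ - ⟪z, z - R z⟫)) l
      (𝓝 (0 * (0 + 2 * (C + ‖z‖)) - 2 * (⟪z, z - R z⟫ - ⟪z, z - R z⟫))) :=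
    (hres.mul (hres.add_const _)).sub (((hz _).sub_const _).const_mul 2)
  have h := ge_of_tendsto' hlim hle
  simp only [zero_mul, sub_self, mul_zero] at h
  have : ‖z - R z‖ = 0 := by nlinarith [norm_nonneg (z - R z)]
  exact (sub_eq_zero.1 (norm_eq_zero.1 this)).symm

lemma fixed_lineMap {R : H → H} (hR : ∀ u v, ‖R u - R v‖ ≤ ‖u - v‖) {u v : H} (hu : R u = u)
    (hv : R v = v) {t : ℝ} (ht0 : 0 ≤ t) (ht1 : t ≤ 1) :
    R (u + t • (v - u)) = u + t • (v - u) := by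
  set w := u + t • (v - u) with hw
  have h1 : ‖R w - u‖ ^ 2 ≤ t ^ 2 * ‖v - u‖ ^ 2 := by
    have := hR w u
    rw [hu, hw, add_sub_cancel_left, norm_smul, Real.norm_of_nonneg ht0] at this
    rw [← mul_pow]
    exact pow_le_pow_left₀ (norm_nonneg _) this 2
  have h2 : ‖R w - v‖ ^ 2 ≤ (1 - t) ^ 2 * ‖v - u‖ ^ 2 := by
    have := hR w v
    rw [hv, show w - v = (1 - t) • (u - v) by rw [hw]; module, norm_smul,
      Real.norm_of_nonneg (sub_nonneg.2 ht1), norm_sub_rev u] at this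
    rw [← mul_pow]
    exact pow_le_pow_left₀ (norm_nonneg _) this 2
  have h3 : ‖R w - w‖ ^ 2 =
      (1 - t) * ‖R w - u‖ ^ 2 + t * ‖R w - v‖ ^ 2 - t * (1 - t) * ‖v - u‖ ^ 2 := by
    rw [show R w - w = (R w - u) - t • (v - u) by rw [hw]; module,
      show R w - v = (R w - u) - (v - u) by module, norm_sub_sq_real (R w - u),
      norm_sub_sq_real (R w - u), norm_smul, inner_smul_right, mul_pow, Real.norm_eq_abs, sq_abs]
    ring
  have h4 := mul_le_mul_of_nonneg_left h1 (sub_nonneg.2 ht1)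
  have h5 := mul_le_mul_of_nonneg_left h2 ht0
  have : ‖R w - w‖ = 0 := by nlinarith [norm_nonneg (R w - w)]
  exact sub_eq_zero.1 (norm_eq_zero.1 this)

lemma inner_nonneg_of_min_norm_fixed {R : H → H} (hR : ∀ u v, ‖R u - R v‖ ≤ ‖u - v‖) {p z : H}
    (hp : R p = p) (hpmin : ∀ q, R q = q → ‖p‖ ≤ ‖q‖) (hz : R z = z) : 0 ≤ ⟪z - p, p⟫ := by
  have hd : HasDerivAt (fun t : ℝ => ‖p + t • (z - p)‖ ^ 2) (2 * ⟪p, z - p⟫) 0 := by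
    have h1 : HasDerivAt (fun t : ℝ => p + t • (z - p)) (z - p) 0 := by
      simpa using ((hasDerivAt_id (0 : ℝ)).smul_const (z - p)).const_add p
    simpa using h1.norm_sq
  have := hd.nonneg_of_le_right fun t ht0 ht1 => by
    have := hpmin _ (fixed_lineMap hR hp hz ht0.le ht1)
    simpa using pow_le_pow_left₀ (norm_nonneg _) this 2
  rw [real_inner_comm]
  linarith

/-- Krasnoselskii–Mann iterations with Tikhonov regularization converge strongly to the fixed
point of minimal norm. -/
theorem tendsto_min_norm_fixed_of_tikhonov [CompleteSpace H] {R : H → H}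
    (hR : ∀ u v, ‖R u - R v‖ ≤ ‖u - v‖) {β a : ℕ → ℝ} (hβ : ∀ n, 0 < β n ∧ β n ≤ 1)
    (hβlim : Tendsto β atTop (𝓝 1)) (hβdiv : ¬ Summable (fun n => 1 - β n))
    (hβvar : Summable (fun n => |β (n + 1) - β n|)) (ha0 : ∀ n, 0 ≤ a n) (ha1 : ∀ n, a n ≤ 1)
    {c : ℝ} (hc : 0 < c) (hac : ∀ᶠ n in atTop, c ≤ a n)
    (havar : Summable (fun n => |a (n + 1) - a n|)) {x : ℕ → H}
    (hiter : ∀ n, x (n + 1) = β n • x n + a n • (R (β n • x n) - β n • x n))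
    {p : H} (hp : R p = p) (hpmin : ∀ q, R q = q → ‖p‖ ≤ ‖q‖) :
    Tendsto x atTop (𝓝 p) := by
  have hS : ∀ n u v, ‖(u + a n • (R u - u)) - (v + a n • (R v - v))‖ ≤ ‖u - v‖ := by
    intro n u v
    rw [show (u + a n • (R u - u)) - (v + a n • (R v - v)) =
      (1 - a n) • (u - v) + a n • (R u - R v) by module]
    refine (norm_add_le _ _).trans ?_
    rw [norm_smul, norm_smul, Real.norm_of_nonneg (ha0 n),
      Real.norm_of_nonneg (sub_nonneg.2 (ha1 n))]
    have := mul_le_mul_of_nonneg_left (hR u v) (ha0 n)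
    linarith
  have hstep : ∀ n, ‖x (n + 1) - p‖ ≤ ‖β n • x n - p‖ := by
    intro n
    have := hS n (β n • x n) p
    rwa [hp, sub_self, smul_zero, add_zero, ← hiter] at this
  obtain ⟨M, hM⟩ : ∃ M, ∀ n, ‖x n - p‖ ≤ M := by
    refine ⟨max ‖x 0 - p‖ ‖p‖, fun n => ?_⟩
    induction n with
    | zero => exact le_max_left _ _
    | succ k ih =>
      refine (hstep k).trans ?_
      rw [show β k • x k - p = β k • (x k - p) + (1 - β k) • (-p) by module]
      refine (norm_add_le _ _).trans ?_
      rw [norm_smul, norm_smul, norm_neg, Real.norm_of_nonneg (hβ k).1.le,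
        Real.norm_of_nonneg (sub_nonneg.2 (hβ k).2)]
      have h1 := mul_le_mul_of_nonneg_left ih (hβ k).1.le
      have h2 := mul_le_mul_of_nonneg_left (le_max_right ‖x 0 - p‖ ‖p‖)
        (sub_nonneg.2 (hβ k).2)
      linarith
  set C := M + ‖p‖ with hC
  have hxC : ∀ n, ‖x n‖ ≤ C := fun n => by
    have := norm_add_le (x n - p) p
    rw [sub_add_cancel] at this
    linarith [hM n]
  have hyC : ∀ n, ‖β n • x n‖ ≤ C := fun n => by
    rw [norm_smul, Real.norm_of_nonneg (hβ n).1.le]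
    nlinarith [norm_nonneg (x n), hxC n, (hβ n).1, (hβ n).2]
  have hRC : ∀ n, ‖R (β n • x n) - β n • x n‖ ≤ 2 * (C + ‖p‖) := fun n => by
    have h1 := hR (β n • x n) p
    have h2 := norm_sub_le_norm_sub_add_norm_sub (R (β n • x n)) p (β n • x n)
    have h3 := norm_sub_le (β n • x n) p
    rw [hp] at h1
    rw [norm_sub_rev p] at h2
    linarith [hyC n]
  have hβdiv' : ¬ Summable (fun n => 1 - β (n + 1)) := fun h =>
    hβdiv ((summable_nat_add_iff 1).1 h)
  have hdiff : Tendsto (fun n => ‖x (n + 1) - x n‖) atTop (𝓝 0) := by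
    refine tendsto_zero_of_le_one_sub_mul_add (a := fun n => 1 - β (n + 1)) (d := fun _ => 0)
      (e := fun n => |β (n + 1) - β n| * C + |a (n + 1) - a n| * (2 * (C + ‖p‖)))
      (fun n => norm_nonneg _) (fun n => sub_nonneg.2 (hβ _).2)
      (fun n => by linarith [(hβ (n + 1)).1]) hβdiv'
      (fun ε hε => Eventually.of_forall fun _ => hε.le) (fun n => ?_)
      ((hβvar.mul_right _).add (havar.mul_right _)) (fun n => ?_)
    · have h1 := (norm_nonneg _).trans (hxC n)
      positivity
    · have e1 : x (n + 1 + 1) - x (n + 1) =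
          ((β (n + 1) • x (n + 1) + a (n + 1) • (R (β (n + 1) • x (n + 1)) - β (n + 1) • x (n + 1)))
            - (β n • x n + a (n + 1) • (R (β n • x n) - β n • x n)))
          + (a (n + 1) - a n) • (R (β n • x n) - β n • x n) := by
        rw [hiter (n + 1)]
        nth_rewrite 4 [hiter n]
        module
      have h1 := hS (n + 1) (β (n + 1) • x (n + 1)) (β n • x n)
      have h2 : ‖β (n + 1) • x (n + 1) - β n • x n‖ ≤
          β (n + 1) * ‖x (n + 1) - x n‖ + |β (n + 1) - β n| * C := by
        rw [show β (n + 1) • x (n + 1) - β n • x n =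
          β (n + 1) • (x (n + 1) - x n) + (β (n + 1) - β n) • x n by module]
        refine (norm_add_le _ _).trans ?_
        rw [norm_smul, norm_smul, Real.norm_of_nonneg (hβ _).1.le, Real.norm_eq_abs]
        gcongr
        exact hxC n
      have h3 : ‖(a (n + 1) - a n) • (R (β n • x n) - β n • x n)‖ ≤
          |a (n + 1) - a n| * (2 * (C + ‖p‖)) := by
        rw [norm_smul, Real.norm_eq_abs]
        gcongr
        exact hRC n
      rw [e1]
      refine (norm_add_le _ _).trans ?_
      linarith
  have hres : Tendsto (fun n => ‖R (β n • x n) - β n • x n‖) atTop (𝓝 0) := by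
    have hlim : Tendsto (fun n => (‖x (n + 1) - x n‖ + (1 - β n) * C) / c) atTop
        (𝓝 ((0 + (1 - 1) * C) / c)) :=
      (hdiff.add ((hβlim.const_sub 1).mul_const C)).div_const c
    rw [sub_self, zero_mul, add_zero, zero_div] at hlim
    refine tendsto_of_tendsto_of_tendsto_of_le_of_le' tendsto_const_nhds hlim
      (Eventually.of_forall fun n => norm_nonneg _) ?_
    filter_upwards [hac] with n hn
    rw [le_div_iff₀ hc]
    have h1 : a n * ‖R (β n • x n) - β n • x n‖ ≤ ‖x (n + 1) - x n‖ + (1 - β n) * C := by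
      rw [← Real.norm_of_nonneg (ha0 n), ← norm_smul,
        show a n • (R (β n • x n) - β n • x n) = (x (n + 1) - x n) + (1 - β n) • x n by
          rw [hiter]; module]
      refine (norm_add_le _ _).trans ?_
      rw [norm_smul, Real.norm_of_nonneg (sub_nonneg.2 (hβ n).2)]
      have := mul_le_mul_of_nonneg_left (hxC n) (sub_nonneg.2 (hβ n).2)
      linarith
    have h2 := mul_le_mul_of_nonneg_right hn (norm_nonneg (R (β n • x n) - β n • x n))
    linarith
  have hweak : ∀ ε > 0, ∀ᶠ n in atTop, -2 * ⟪β n • x n - p, p⟫ ≤ ε := by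
    intro ε hε
    by_contra hcon
    rw [not_eventually] at hcon
    let l : Filter ℕ := atTop ⊓ 𝓟 {n | ¬ -2 * ⟪β n • x n - p, p⟫ ≤ ε}
    have : l.NeBot := frequently_mem_iff_neBot.1 hcon
    have hU : (Ultrafilter.of l : Filter ℕ) ≤ l := Ultrafilter.of_le l
    obtain ⟨z, hz⟩ := exists_weak_limit (Ultrafilter.of l) hyC
    have hzfix := fixed_of_weak_limit hR hyC hz (hres.mono_left (hU.trans inf_le_left))
    have h1 := inner_nonneg_of_min_norm_fixed hR hp hpmin hzfix
    have h2 : Tendsto (fun n => -2 * ⟪β n • x n - p, p⟫) (Ultrafilter.of l)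
        (𝓝 (-2 * ⟪z - p, p⟫)) := by
      simp only [inner_sub_left]
      exact ((hz p).sub_const _).const_mul _
    have h3 : ε ≤ -2 * ⟪z - p, p⟫ := by
      refine ge_of_tendsto h2 ?_
      filter_upwards [hU (mem_inf_of_right (mem_principal_self _))] with n hn
      exact (not_le.1 hn).le
    linarith
  have hsq : Tendsto (fun n => ‖x n - p‖ ^ 2) atTop (𝓝 0) := by
    refine tendsto_zero_of_le_one_sub_mul_add (a := fun n => 1 - β n)
      (d := fun n => -2 * ⟪β n • x n - p, p⟫) (e := fun _ => 0)
      (fun n => by positivity) (fun n => sub_nonneg.2 (hβ n).2)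
      (fun n => by linarith [(hβ n).1]) hβdiv hweak (fun _ => le_rfl) summable_zero (fun n => ?_)
    have h1 := pow_le_pow_left₀ (norm_nonneg _) (hstep n) 2
    have h2 : ‖β n • (x n - p)‖ ^ 2 = ‖β n • x n - p‖ ^ 2
        + 2 * (1 - β n) * ⟪β n • x n - p, p⟫ + (1 - β n) ^ 2 * ‖p‖ ^ 2 := by
      rw [show β n • (x n - p) = (β n • x n - p) + (1 - β n) • p by module, norm_add_sq_real,
        norm_smul, inner_smul_right, mul_pow, Real.norm_eq_abs, sq_abs]
      ring
    rw [norm_smul, mul_pow, Real.norm_eq_abs, sq_abs] at h2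
    have h3 : β n ^ 2 * ‖x n - p‖ ^ 2 ≤ β n * ‖x n - p‖ ^ 2 := by
      gcongr
      nlinarith [(hβ n).1, (hβ n).2]
    nlinarith [mul_nonneg (sq_nonneg (1 - β n)) (sq_nonneg ‖p‖)]
  rw [tendsto_iff_norm_sub_tendsto_zero]
  simpa [Real.sqrt_sq] using hsq.sqrt

end Nonexpansive

section ForwardBackward

variable {H : Type*} [NormedAddCommGroup H] [InnerProductSpace ℝ H]

lemma HasGradientAt.hasDerivAt_add_smul [CompleteSpace H] {g : H → ℝ} {v x w : H} {t : ℝ}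
    (hg : HasGradientAt g v (x + t • w)) :
    HasDerivAt (fun s : ℝ => g (x + s • w)) ⟪v, w⟫ t := by
  have h1 : HasDerivAt (fun s : ℝ => x + s • w) w t := by
    simpa using ((hasDerivAt_id t).smul_const w).const_add x
  have h2 := HasFDerivAt.comp_hasDerivAt t hg.hasFDerivAt h1
  rwa [InnerProductSpace.toDual_apply_apply] at h2

lemma ConvexOn.add_inner_gradient_le [CompleteSpace H] {g : H → ℝ}
    (hg : ConvexOn ℝ Set.univ g) {v x : H} (hv : HasGradientAt g v x) (y : H) :
    g x + ⟪v, y - x⟫ ≤ g y := by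
  have hd : HasDerivAt (fun t : ℝ => t * (g y - g x) - g (x + t • (y - x)))
      (1 * (g y - g x) - ⟪v, y - x⟫) 0 :=
    ((hasDerivAt_id (0 : ℝ)).mul_const _).sub
      (HasGradientAt.hasDerivAt_add_smul (by simpa using hv))
  have := hd.nonneg_of_le_right fun t ht0 ht1 => by
    have h := hg.2 (Set.mem_univ x) (Set.mem_univ y) (sub_nonneg.2 ht1) ht0.le (by ring)
    rw [show (1 - t) • x + t • y = x + t • (y - x) by module] at h
    simp only [smul_eq_mul] at h
    simp only [zero_mul, zero_smul, add_zero]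
    linarith
  linarith

/-- The descent lemma for functions with `L`-Lipschitz gradient. -/
lemma le_add_inner_gradient_add_sq [CompleteSpace H] {g : H → ℝ} {g' : H → H} {L : ℝ}
    (hg' : ∀ x, HasGradientAt g (g' x) x) (hL : ∀ x y, ‖g' x - g' y‖ ≤ L * ‖x - y‖) (x w : H) :
    g (x + w) ≤ g x + ⟪g' x, w⟫ + L / 2 * ‖w‖ ^ 2 := by
  have hd : ∀ t : ℝ, HasDerivAt
      (fun s : ℝ => g (x + s • w) - s * ⟪g' x, w⟫ - s ^ 2 * (L / 2 * ‖w‖ ^ 2))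
      (⟪g' (x + t • w), w⟫ - 1 * ⟪g' x, w⟫ - (2 * t) * (L / 2 * ‖w‖ ^ 2)) t := by
    intro t
    refine (((hg' _).hasDerivAt_add_smul).sub ((hasDerivAt_id t).mul_const _)).sub
      (HasDerivAt.mul_const ?_ _)
    simpa using hasDerivAt_pow 2 t
  have hanti : AntitoneOn
      (fun s : ℝ => g (x + s • w) - s * ⟪g' x, w⟫ - s ^ 2 * (L / 2 * ‖w‖ ^ 2)) (Set.Icc 0 1) := by
    refine antitoneOn_of_deriv_nonpos (convex_Icc 0 1)
      (fun t _ => (hd t).continuousAt.continuousWithinAt)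
      (fun t _ => (hd t).differentiableAt.differentiableWithinAt) fun t ht => ?_
    rw [interior_Icc] at ht
    rw [(hd t).deriv, one_mul, ← inner_sub_left]
    have h1 := real_inner_le_norm (g' (x + t • w) - g' x) w
    have h2 := hL (x + t • w) x
    rw [add_sub_cancel_left, norm_smul, Real.norm_of_nonneg ht.1.le] at h2
    have h3 := mul_le_mul_of_nonneg_right h2 (norm_nonneg w)
    nlinarith
  have := hanti (Set.left_mem_Icc.2 zero_le_one) (Set.right_mem_Icc.2 zero_le_one) zero_le_one
  simp only [one_smul, one_mul, one_pow, zero_smul, add_zero, zero_mul, sub_zero] at this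
  norm_num at this
  linarith

/-- The Baillon–Haddad theorem. -/
lemma ConvexOn.gradient_cocoercive [CompleteSpace H] {g : H → ℝ} (hg : ConvexOn ℝ Set.univ g)
    {g' : H → H} {b : ℝ} (hb : 0 < b) (hg' : ∀ x, HasGradientAt g (g' x) x)
    (hL : ∀ x y, ‖g' x - g' y‖ ≤ (1 / b) * ‖x - y‖) (x y : H) :
    b * ‖g' x - g' y‖ ^ 2 ≤ ⟪g' x - g' y, x - y⟫ := by
  have key : ∀ x y : H, g x + ⟪g' x, y - x⟫ + b / 2 * ‖g' x - g' y‖ ^ 2 ≤ g y := by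
    intro x y
    have h1 := hg.add_inner_gradient_le (hg' x) (y + b • (g' x - g' y))
    have h2 := le_add_inner_gradient_add_sq hg' hL y (b • (g' x - g' y))
    rw [add_sub_right_comm, inner_add_right, inner_smul_right] at h1
    rw [inner_smul_right, norm_smul, mul_pow, Real.norm_of_nonneg hb.le] at h2
    have h3 : ⟪g' x, g' x - g' y⟫ - ⟪g' y, g' x - g' y⟫ = ‖g' x - g' y‖ ^ 2 := by
      rw [← inner_sub_left, real_inner_self_eq_norm_sq]
    have h4 : 1 / b / 2 * (b ^ 2 * ‖g' x - g' y‖ ^ 2) = b / 2 * ‖g' x - g' y‖ ^ 2 := by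
      field_simp
    rw [h4] at h2
    have h5 : b * ⟪g' x, g' x - g' y⟫ - b * ⟪g' y, g' x - g' y⟫ = b * ‖g' x - g' y‖ ^ 2 := by
      rw [← h3]; ring
    linarith
  have h1 := key x y
  have h2 := key y x
  rw [norm_sub_rev (g' y)] at h2
  rw [← neg_sub x y, inner_neg_right] at h1
  rw [inner_sub_left]
  linarith

/-- First-order optimality condition for `f + h`, with `f` convex and `h` differentiable
along the segment towards `y`. -/
lemma toReal_le_toReal_add_of_isMin {f : H → EReal}
    (hfconv : ∀ x y : H, ∀ t : ℝ, 0 ≤ t → t ≤ 1 →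
      f (t • x + (1 - t) • y) ≤ ((t : EReal) * f x + ((1 - t : ℝ) : EReal) * f y))
    (hfbot : ∀ x, f x ≠ ⊥) {h : H → ℝ} {q y : H} {d : ℝ}
    (hmin : ∀ z, f q + (h q : EReal) ≤ f z + (h z : EReal))
    (hq : f q ≠ ⊤) (hy : f y ≠ ⊤)
    (hd : HasDerivAt (fun t : ℝ => h (q + t • (y - q))) d 0) :
    (f q).toReal ≤ (f y).toReal + d := by
  have hd' : HasDerivAt
      (fun t : ℝ => t * ((f y).toReal - (f q).toReal) + h (q + t • (y - q)))
      (1 * ((f y).toReal - (f q).toReal) + d) 0 :=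
    ((hasDerivAt_id (0 : ℝ)).mul_const _).add hd
  have := hd'.nonneg_of_le_right fun t ht0 ht1 => by
    have h1 := hfconv y q t ht0.le ht1
    have h2 := hmin (q + t • (y - q))
    rw [show t • y + (1 - t) • q = q + t • (y - q) by module] at h1
    have h3 := h2.trans (add_le_add_left h1 _)
    rw [← EReal.coe_toReal hq (hfbot q), ← EReal.coe_toReal hy (hfbot y)] at h3
    norm_cast at h3
    simp only [zero_mul, zero_smul, add_zero, zero_add]
    linarith
  linarith

lemma ne_top_of_forall_add_le {α : Type*} {f : α → EReal} (hftop : ∃ x, f x ≠ ⊤) {h : α → ℝ}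
    {q : α}
    (hmin : ∀ z, f q + (h q : EReal) ≤ f z + (h z : EReal)) : f q ≠ ⊤ := by
  obtain ⟨z, hz⟩ := hftop
  intro htop
  have h1 := hmin z
  rw [htop, EReal.top_add_coe, top_le_iff] at h1
  exact EReal.add_ne_top hz (EReal.coe_ne_top _) h1

/-- Variational characterization of the proximal point. -/
lemma inner_le_of_isMin_prox {f : H → EReal}
    (hfconv : ∀ x y : H, ∀ t : ℝ, 0 ≤ t → t ≤ 1 →
      f (t • x + (1 - t) • y) ≤ ((t : EReal) * f x + ((1 - t : ℝ) : EReal) * f y))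
    (hfbot : ∀ x, f x ≠ ⊥) {γ : ℝ} (hγ : 0 < γ) {u q y : H}
    (hmin : ∀ z, f q + ((‖q - u‖ ^ 2 / (2 * γ) : ℝ) : EReal) ≤
      f z + ((‖z - u‖ ^ 2 / (2 * γ) : ℝ) : EReal))
    (hq : f q ≠ ⊤) (hy : f y ≠ ⊤) :
    ⟪u - q, y - q⟫ ≤ γ * ((f y).toReal - (f q).toReal) := by
  have hd : HasDerivAt (fun t : ℝ => ‖(q + t • (y - q)) - u‖ ^ 2 / (2 * γ))
      (2 * ⟪q - u, y - q⟫ / (2 * γ)) 0 := by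
    have h1 : HasDerivAt (fun t : ℝ => (q + t • (y - q)) - u) (y - q) 0 := by
      simpa using (((hasDerivAt_id (0 : ℝ)).smul_const (y - q)).const_add q).sub_const u
    simpa using h1.norm_sq.div_const (2 * γ)
  have h1 := toReal_le_toReal_add_of_isMin hfconv hfbot
    (h := fun z => ‖z - u‖ ^ 2 / (2 * γ)) hmin hq hy hd
  have h2 : 2 * ⟪q - u, y - q⟫ / (2 * γ) * γ = ⟪q - u, y - q⟫ := by
    field_simp
  have h3 := mul_le_mul_of_nonneg_right h1 hγ.le
  rw [add_mul, h2] at h3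
  rw [← neg_sub q u, inner_neg_left]
  linarith

/-- The relaxation by the factor `(4 * b - γ) / (2 * b)` of the composition of a firmly
nonexpansive map with a forward step along a `b`-cocoercive operator is nonexpansive; here `d`,
`t` and `e` stand for the differences of arguments, of values, and of operator values. -/
lemma norm_add_smul_sub_le {b γ : ℝ} (hb : 0 < b) (hγ0 : 0 < γ) (hγ : γ ≤ 2 * b) {d t e : H}
    (hfirm : ‖t‖ ^ 2 ≤ ⟪t, d - γ • e⟫) (hcoco : b * ‖e‖ ^ 2 ≤ ⟪e, d⟫) :
    ‖d + ((4 * b - γ) / (2 * b)) • (t - d)‖ ≤ ‖d‖ := by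
  set m := (4 * b - γ) / (2 * b) with hm
  have hmb : m * (2 * b) = 4 * b - γ := by rw [hm]; field_simp
  have hm0 : 0 ≤ m := by rw [hm]; apply div_nonneg <;> linarith
  obtain ⟨w, rfl⟩ : ∃ w, t = d + w := ⟨t - d, by abel⟩
  rw [add_sub_cancel_left]
  have h1 : ‖w‖ ^ 2 + ⟪d, w⟫ ≤ -γ * ⟪w, e⟫ - γ * ⟪e, d⟫ := by
    rw [norm_add_sq_real, inner_sub_right, inner_add_left, inner_add_left, inner_smul_right,
      inner_smul_right, real_inner_self_eq_norm_sq, real_inner_comm d w, real_inner_comm e d]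
      at hfirm
    linarith
  have h2 : 0 ≤ ‖w‖ ^ 2 + 4 * b * ⟪w, e⟫ + 4 * b ^ 2 * ‖e‖ ^ 2 := by
    have : 0 ≤ ‖w + (2 * b) • e‖ ^ 2 := by positivity
    rw [norm_add_sq_real, inner_smul_right, norm_smul, mul_pow, Real.norm_eq_abs, sq_abs] at this
    linarith
  have h3 : 2 * ⟪d, w⟫ + m * ‖w‖ ^ 2 ≤ 0 := by
    have h4 : 0 ≤ γ * (‖w‖ ^ 2 + 4 * b * ⟪w, e⟫ + 4 * b ^ 2 * ‖e‖ ^ 2) :=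
      mul_nonneg hγ0.le h2
    have h5 := mul_le_mul_of_nonneg_left hcoco (by positivity : 0 ≤ 4 * b * γ)
    have h6 := mul_le_mul_of_nonneg_left h1 (by positivity : 0 ≤ 4 * b)
    have h7 : (2 * b) * (2 * ⟪d, w⟫ + m * ‖w‖ ^ 2) ≤ 0 := by
      have : (2 * b) * (2 * ⟪d, w⟫ + m * ‖w‖ ^ 2) =
        4 * b * ⟪d, w⟫ + (4 * b - γ) * ‖w‖ ^ 2 := by rw [← hmb]; ring
      rw [this]
      nlinarith
    exact nonpos_of_mul_nonpos_right h7 (by positivity)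
  refine le_of_sq_le_sq ?_ (norm_nonneg _)
  rw [norm_add_sq_real, inner_smul_right, norm_smul, mul_pow, Real.norm_eq_abs, sq_abs]
  nlinarith [mul_nonpos_of_nonneg_of_nonpos hm0 h3]

end ForwardBackward


open Filter Topology

/-- Strong convergence of the proximal-gradient (forward-backward) algorithm
with Tikhonov regularization terms to the minimal norm minimizer of `f + g`,
where `f : H → EReal` is proper, convex and lower semicontinuous, `g : H → ℝ`
is convex and differentiable with `(1/β)`-Lipschitz gradient `g'`,
`γ ∈ (0, 2β]`, and `prox` is the proximal operator of `γ f`, characterized by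
`prox x` minimizing `y ↦ f y + ‖y - x‖² / (2γ)`. -/
theorem proxGrad_tikhonov_strong_convergence
    {H : Type*} [NormedAddCommGroup H] [InnerProductSpace ℝ H] [CompleteSpace H]
    (f : H → EReal)
    (hfconv : ∀ x y : H, ∀ t : ℝ, 0 ≤ t → t ≤ 1 →
      f (t • x + (1 - t) • y) ≤ ((t : EReal) * f x + ((1 - t : ℝ) : EReal) * f y))
    (hflsc : LowerSemicontinuous f)
    (hfproper : (∀ x, f x ≠ ⊥) ∧ ∃ x, f x ≠ ⊤)
    (βc : ℝ) (hβc : 0 < βc)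
    (g : H → ℝ) (hgconv : ConvexOn ℝ Set.univ g)
    (g' : H → H) (hg' : ∀ x : H, HasGradientAt g (g' x) x)
    (hglip : ∀ x y : H, ‖g' x - g' y‖ ≤ (1 / βc) * ‖x - y‖)
    (γ : ℝ) (hγ : γ ∈ Set.Ioc 0 (2 * βc))
    (prox : H → H)
    (hprox : ∀ x y : H,
      f (prox x) + ((‖prox x - x‖ ^ 2 / (2 * γ) : ℝ) : EReal) ≤
        f y + ((‖y - x‖ ^ 2 / (2 * γ) : ℝ) : EReal))
    (hargmin_ne :
      {z : H | ∀ y : H, f z + ((g z : ℝ) : EReal) ≤ f y + ((g y : ℝ) : EReal)}.Nonempty)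
    (β lam : ℕ → ℝ)
    (hβ : ∀ n, 0 < β n ∧ β n ≤ 1)
    (hβlim : Tendsto β atTop (nhds 1))
    (hβdiv : ¬ Summable (fun n => 1 - β n))
    (hβvar : Summable (fun n => |β (n + 1) - β n|))
    (hlam : ∀ n, 0 < lam n ∧ lam n ≤ (4 * βc - γ) / (2 * βc))
    (hlaminf : 0 < Filter.liminf lam Filter.atTop)
    (hlamvar : Summable (fun n => |lam (n + 1) - lam n|))
    (x : ℕ → H)
    (hiter : ∀ n, x (n + 1) =
      (1 - lam n) • (β n • x n) + lam n • prox (β n • x n - γ • g' (β n • x n)))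
    (p : H)
    (hp : ∀ y : H, f p + ((g p : ℝ) : EReal) ≤ f y + ((g y : ℝ) : EReal))
    (hpmin : ∀ q : H,
      (∀ y : H, f q + ((g q : ℝ) : EReal) ≤ f y + ((g y : ℝ) : EReal)) → ‖p‖ ≤ ‖q‖) :
    Tendsto x atTop (nhds p) := by
  obtain ⟨hfbot, hftop⟩ := hfproper
  obtain ⟨hγ0, hγ1⟩ := hγ
  have hproxtop : ∀ u, f (prox u) ≠ ⊤ := fun u =>
    ne_top_of_forall_add_le (h := fun z => ‖z - u‖ ^ 2 / (2 * γ)) hftop (hprox u)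
  have hvar : ∀ u y, f y ≠ ⊤ →
      ⟪u - prox u, y - prox u⟫ ≤ γ * ((f y).toReal - (f (prox u)).toReal) := fun u y hy =>
    inner_le_of_isMin_prox hfconv hfbot hγ0 (hprox u) (hproxtop u) hy
  have hfirm : ∀ u v, ‖prox u - prox v‖ ^ 2 ≤ ⟪prox u - prox v, u - v⟫ := by
    intro u v
    have h1 := hvar u (prox v) (hproxtop v)
    have h2 := hvar v (prox u) (hproxtop u)
    have h3 : ‖prox u - prox v‖ ^ 2 - ⟪prox u - prox v, u - v⟫ =
        ⟪u - prox u, prox v - prox u⟫ + ⟪v - prox v, prox u - prox v⟫ := by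
      rw [← real_inner_self_eq_norm_sq, ← inner_sub_right, ← neg_sub (prox u) (prox v),
        inner_neg_right, neg_add_eq_sub, ← inner_sub_left, real_inner_comm]
      congr 1
      abel
    linarith
  set T : H → H := fun u => prox (u - γ • g' u) with hT
  set m : ℝ := (4 * βc - γ) / (2 * βc) with hm
  have hm0 : 0 < m := div_pos (by linarith) (by linarith)
  set R : H → H := fun u => u + m • (T u - u) with hRdef
  have hR : ∀ u v, ‖R u - R v‖ ≤ ‖u - v‖ := by
    intro u v
    have := norm_add_smul_sub_le hβc hγ0 hγ1 (d := u - v) (t := T u - T v) (e := g' u - g' v)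
      (by
        have := hfirm (u - γ • g' u) (v - γ • g' v)
        rwa [show u - γ • g' u - (v - γ • g' v) = u - v - γ • (g' u - g' v) by module] at this)
      (hgconv.gradient_cocoercive hβc hg' hglip u v)
    rwa [show R u - R v = u - v + m • (T u - T v - (u - v)) by simp only [hRdef]; module]
  have hfix : ∀ q, R q = q ↔ T q = q := by
    intro q
    simp only [hRdef, add_eq_left, smul_eq_zero, hm0.ne', false_or, sub_eq_zero]
  have hmin_of_fix : ∀ q, T q = q →
      ∀ y : H, f q + ((g q : ℝ) : EReal) ≤ f y + ((g y : ℝ) : EReal) := by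
    intro q hq y
    have hqtop : f q ≠ ⊤ := hq ▸ hproxtop _
    by_cases hy : f y = ⊤
    · rw [hy, EReal.top_add_coe]
      exact le_top
    have h1 := hvar (q - γ • g' q) y hy
    rw [show prox (q - γ • g' q) = q from hq, sub_sub_cancel_left, inner_neg_left,
      real_inner_smul_left] at h1
    have h2 := hgconv.add_inner_gradient_le (hg' q) y
    have h3 : -⟪g' q, y - q⟫ ≤ (f y).toReal - (f q).toReal :=
      le_of_mul_le_mul_left (by linarith) hγ0
    rw [← EReal.coe_toReal hqtop (hfbot q), ← EReal.coe_toReal hy (hfbot y)]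
    norm_cast
    linarith
  have hpfix : T p = p := by
    have hptop : f p ≠ ⊤ := ne_top_of_forall_add_le hftop hp
    have h1 := toReal_le_toReal_add_of_isMin hfconv hfbot hp hptop
      (hproxtop (p - γ • g' p)) (HasGradientAt.hasDerivAt_add_smul (by simpa using hg' p))
    have h2 := hvar (p - γ • g' p) p hptop
    change _ ≤ (f (T p)).toReal + ⟪g' p, T p - p⟫ at h1
    change ⟪p - γ • g' p - T p, p - T p⟫ ≤ γ * ((f p).toReal - (f (T p)).toReal) at h2
    rw [sub_right_comm, inner_sub_left, real_inner_self_eq_norm_sq, real_inner_smul_left] at h2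
    rw [← neg_sub p (T p), inner_neg_right] at h1
    have h3 := mul_le_mul_of_nonneg_left h1 hγ0.le
    have : ‖p - T p‖ = 0 := by nlinarith [norm_nonneg (p - T p)]
    exact (sub_eq_zero.1 (norm_eq_zero.1 this)).symm
  obtain ⟨c, hc0, hc⟩ := exists_between hlaminf
  have hclam : ∀ᶠ n in atTop, c < lam n :=
    eventually_lt_of_lt_liminf hc (isBoundedUnder_of ⟨0, fun n => (hlam n).1.le⟩)
  refine tendsto_min_norm_fixed_of_tikhonov hR (a := fun n => lam n / m) hβ hβlim hβdiv hβvar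
    (fun n => (div_pos (hlam n).1 hm0).le) (fun n => (div_le_one hm0).2 (hlam n).2)
    (div_pos hc0 hm0) ?_ ?_ (fun n => ?_) ((hfix p).2 hpfix)
    fun q hq => hpmin q (hmin_of_fix q ((hfix q).1 hq))
  · filter_upwards [hclam] with n hn
    exact div_le_div_of_nonneg_right hn.le hm0.le
  · refine (hlamvar.div_const m).congr fun n => ?_
    rw [← sub_div, abs_div, abs_of_pos hm0]
  · rw [hiter n]
    simp only [hRdef, add_sub_cancel_left, smul_smul, div_mul_cancel₀ _ hm0.ne', hT]
    module
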